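/- Let λ be a partition and n ≥ |λ| + λ_1. The restriction multiplicity of the irreducible S_n-module indexed by (n−|λ|,λ) in the irreducible polynomial GL_n-module indexed by a partition ν equals ⟨s_ν, s_{(n−|λ|,λ)}[1 + h_1 + h_2 + h_3 + ⋯]⟩, where [·] denotes plethysm of symmetric functions. -/

import Mathlib

open scoped BigOperators
noncomputable section

/-- The ring of symmetric functions, presented as `ℚ[p₁, p₂, p₃, …]`,
with the variable `X k` representing the power sum `p_k` (the variable `X 0` is unused). -/
abbrev SymFn := MvPolynomial ℕ ℚ

/-- The power sum symmetric function `p_k`. -/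
def pGen (k : ℕ) : SymFn := MvPolynomial.X k

/-- `p_λ` for a multiset of parts. -/
def pMul (m : Multiset ℕ) : SymFn := (m.map pGen).prod

/-- `p_λ` for a partition `λ`. -/
def pPart {n : ℕ} (lam : n.Partition) : SymFn := pMul lam.parts

/-- `z_λ = ∏_i i^{m_i(λ)} m_i(λ)!`. -/
def zed {n : ℕ} (lam : n.Partition) : ℚ :=
  ∏ i ∈ Finset.range (n + 1),
    (i : ℚ) ^ (lam.parts.count i) * (Nat.factorial (lam.parts.count i))

/-- `z` of a monomial in the `p`-generators. -/
def zMon (m : ℕ →₀ ℕ) : ℚ :=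
  ∏ i ∈ m.support, (i : ℚ) ^ (m i) * (Nat.factorial (m i))

/-- The Hall scalar product, determined by `⟨p_λ, p_μ⟩ = z_λ δ_{λμ}`. -/
def hall (f g : SymFn) : ℚ :=
  ∑ m ∈ f.support, MvPolynomial.coeff m f * MvPolynomial.coeff m g * zMon m

/-- The complete homogeneous symmetric function `h_m = ∑_{λ ⊢ m} p_λ / z_λ`. -/
def hFn (m : ℕ) : SymFn := ∑ lam : m.Partition, (zed lam)⁻¹ • pPart lam

/-- `h_k` for an integer index, vanishing for negative `k`. -/
def hInt (k : ℤ) : SymFn := if 0 ≤ k then hFn k.toNat else 0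

/-- The Schur function of a (finite, weakly decreasing) list of row lengths,
via the Jacobi–Trudi determinant `s_λ = det(h_{λ_i - i + j})`. -/
def schurList (l : List ℕ) : SymFn :=
  Matrix.det (Matrix.of fun i j : Fin l.length =>
    hInt ((l.get i : ℤ) - (i : ℤ) + (j : ℤ)))

/-- The parts of a partition, sorted in weakly decreasing order. -/
def partList {n : ℕ} (lam : n.Partition) : List ℕ := (lam.parts.sort (· ≤ ·)).reverse

/-- The Schur function `s_λ`. -/
def schur {n : ℕ} (lam : n.Partition) : SymFn := schurList (partList lam)

/-- Evaluation `f(Ξ_ν)` of a symmetric function at the eigenvalues of a permutation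
matrix of cycle type `ν`: the power sum `p_k` evaluates to `∑_{j ∈ ν, j ∣ k} j`. -/
def xiEval {n : ℕ} (nu : n.Partition) (f : SymFn) : ℚ :=
  MvPolynomial.eval (fun k => ((nu.parts.filter (fun j => j ∣ k)).sum : ℚ)) f

/-- The character scalar product `⟨f, g⟩_@ = ∑_{ν ⊢ n} f(Ξ_ν) g(Ξ_ν) / z_ν`. -/
def atProd (n : ℕ) (f g : SymFn) : ℚ :=
  ∑ nu : n.Partition, xiEval nu f * xiEval nu g / zed nu

/-- The Frobenius-type map `φ_n(f) = ∑_{ν ⊢ n} f(Ξ_ν) p_ν / z_ν`. -/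
def phi (n : ℕ) (f : SymFn) : SymFn :=
  ∑ nu : n.Partition, (xiEval nu f / zed nu) • pPart nu

/-- The Kronecker (internal) product, determined by
`(p_λ/z_λ) ∗ (p_μ/z_μ) = δ_{λμ} p_λ/z_λ`. -/
def kron (f g : SymFn) : SymFn :=
  ∑ m ∈ f.support,
    MvPolynomial.monomial m (MvPolynomial.coeff m f * MvPolynomial.coeff m g * zMon m)

end


/-- The plethysm `p_k[g]`: substitute `p_j ↦ p_{jk}` in `g`. -/
noncomputable def plethP (k : ℕ) (g : SymFn) : SymFn :=
  MvPolynomial.eval₂ MvPolynomial.C (fun j => MvPolynomial.X (j * k)) g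

/-- The plethysm `f[g]` of symmetric functions. -/
noncomputable def pleth (f g : SymFn) : SymFn :=
  MvPolynomial.eval₂ MvPolynomial.C (fun k => plethP k g) f

open MvPolynomial

/-- The bigrading of `ℚ[p₀, p₁, p₂, …]` by the degree of symmetric functions and the degree in the
unused variable `p₀`. -/
def biWeight (k : ℕ) : ℕ × ℕ := (k, if k = 0 then 1 else 0)

lemma weight_biWeight_fst (m : ℕ →₀ ℕ) :
    (Finsupp.weight biWeight m).1 = (Finsupp.toMultiset m).sum := by
  induction m using Finsupp.induction_linear with
  | zero => simp
  | add a b ha hb => simp [ha, hb]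
  | single a b => simp [Finsupp.weight_single, biWeight, Finsupp.toMultiset_single, Multiset.sum_nsmul]

lemma weight_biWeight_snd (m : ℕ →₀ ℕ) : (Finsupp.weight biWeight m).2 = m 0 := by
  induction m using Finsupp.induction_linear with
  | zero => simp
  | add a b ha hb => simp [ha, hb]
  | single a b => by_cases h : a = 0 <;> simp [Finsupp.weight_single, biWeight, h]

lemma pMul_eq_monomial (s : Multiset ℕ) : pMul s = monomial (Multiset.toFinsupp s) 1 := by
  induction s using Multiset.induction with
  | empty => simp [pMul]
  | cons a s ih =>
    rw [← Multiset.singleton_add, map_add, Multiset.toFinsupp_singleton, pMul, Multiset.map_add,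
      Multiset.prod_add, ← pMul, ← pMul, ih]
    simp [pMul, pGen, X, monomial_mul]

lemma zMon_eq_prod {m : ℕ →₀ ℕ} {t : Finset ℕ} (h : m.support ⊆ t) :
    zMon m = ∏ i ∈ t, (i : ℚ) ^ (m i) * (Nat.factorial (m i)) := by
  refine Finset.prod_subset h fun i _ hi => ?_
  simp [Finsupp.notMem_support_iff.mp hi]

lemma zMon_ne_zero {m : ℕ →₀ ℕ} (h : m 0 = 0) : zMon m ≠ 0 := by
  refine Finset.prod_ne_zero_iff.mpr fun i hi => mul_ne_zero (pow_ne_zero _ ?_) (by positivity)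
  rintro hi0
  rw [Nat.cast_eq_zero] at hi0
  subst hi0
  exact Finsupp.mem_support_iff.mp hi h

lemma zMon_eq_zero {m : ℕ →₀ ℕ} (h : m 0 ≠ 0) : zMon m = 0 :=
  Finset.prod_eq_zero (Finsupp.mem_support_iff.mpr h) (by simp [h])

lemma zMon_add_single (m : ℕ →₀ ℕ) (K : ℕ) :
    zMon (m + Finsupp.single K 1) = zMon m * (K * (m K + 1)) := by
  have hs : m.support ⊆ insert K m.support := Finset.subset_insert _ _
  have hs' : (m + Finsupp.single K 1).support ⊆ insert K m.support := by
    intro i hi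
    by_cases h : i = K
    · simp [h]
    · simpa [h, Finsupp.single_apply, Ne.symm h] using hi
  rw [zMon_eq_prod hs, zMon_eq_prod hs',
    ← Finset.mul_prod_erase _ _ (Finset.mem_insert_self K m.support),
    ← Finset.mul_prod_erase _ _ (Finset.mem_insert_self K m.support)]
  have : ∀ i ∈ (insert K m.support).erase K,
      (i : ℚ) ^ ((m + Finsupp.single K 1 : ℕ →₀ ℕ) i)
          * (Nat.factorial ((m + Finsupp.single K 1 : ℕ →₀ ℕ) i))
        = (i : ℚ) ^ (m i) * (Nat.factorial (m i)) := by
    intro i hi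
    simp [Ne.symm (Finset.ne_of_mem_erase hi)]
  rw [Finset.prod_congr rfl this]
  simp [Nat.factorial_succ, pow_succ]
  ring

lemma zed_eq_zMon {n : ℕ} (lam : n.Partition) : zed lam = zMon (Multiset.toFinsupp lam.parts) := by
  rw [zed, zMon_eq_prod (t := Finset.range (n + 1))]
  · simp
  · intro i hi
    have : i ∈ lam.parts := by simpa using hi
    have := Nat.Partition.le_of_mem_parts this
    simpa using Nat.lt_succ_of_le this

lemma toFinsupp_parts_zero {n : ℕ} (lam : n.Partition) : Multiset.toFinsupp lam.parts 0 = 0 := by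
  rw [Multiset.toFinsupp_apply, Multiset.count_eq_zero]
  exact fun h => (lam.parts_pos h).ne' rfl

lemma zed_ne_zero {n : ℕ} (lam : n.Partition) : zed lam ≠ 0 := by
  rw [zed_eq_zMon]
  exact zMon_ne_zero (toFinsupp_parts_zero lam)

/-- The exponents of a monomial of degree `n` record the parts of a partition of `n`. -/
lemma exists_partition {n : ℕ} {m : ℕ →₀ ℕ} (hm : Finsupp.weight biWeight m = (n, 0)) :
    ∃ lam : n.Partition, Multiset.toFinsupp lam.parts = m := by
  refine ⟨⟨Finsupp.toMultiset m, fun {i} hi => ?_, ?_⟩, by simp⟩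
  · rw [Finsupp.mem_toMultiset, Finsupp.mem_support_iff] at hi
    refine Nat.pos_of_ne_zero ?_
    rintro rfl
    exact hi (by rw [← weight_biWeight_snd, hm])
  · rw [← weight_biWeight_fst, hm]

lemma weight_parts {n : ℕ} (lam : n.Partition) :
    Finsupp.weight biWeight (Multiset.toFinsupp lam.parts) = (n, 0) := by
  ext
  · simp [weight_biWeight_fst, lam.parts_sum]
  · simp only [weight_biWeight_snd, toFinsupp_parts_zero]

lemma toFinsupp_parts_injective {n : ℕ} :
    Function.Injective fun lam : n.Partition => Multiset.toFinsupp lam.parts :=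
  fun _ _ h => Nat.Partition.ext (Multiset.toFinsupp.injective h)

lemma coeff_sum_smul_pPart {n : ℕ} (c : n.Partition → ℚ) (lam : n.Partition) :
    coeff (Multiset.toFinsupp lam.parts) (∑ mu, c mu • pPart mu) = c lam := by
  rw [coeff_sum, Finset.sum_eq_single lam]
  · simp [pPart, pMul_eq_monomial]
  · intro mu _ hne
    simp only [pPart, pMul_eq_monomial, coeff_smul, coeff_monomial, smul_eq_mul]
    rw [if_neg fun h => hne (toFinsupp_parts_injective h), mul_zero]
  · simp

lemma isWeightedHomogeneous_sum_smul_pPart {n : ℕ} (c : n.Partition → ℚ) :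
    IsWeightedHomogeneous biWeight (∑ mu, c mu • pPart mu) (n, 0) := by
  refine IsWeightedHomogeneous.sum _ _ _ fun mu _ => ?_
  rw [pPart, pMul_eq_monomial, smul_monomial]
  exact isWeightedHomogeneous_monomial _ _ _ (weight_parts mu)

/-- The expansion of a homogeneous symmetric function in power sums. -/
lemma eq_sum_coeff_smul_pPart {n : ℕ} {g : SymFn} (hg : IsWeightedHomogeneous biWeight g (n, 0)) :
    g = ∑ mu : n.Partition, coeff (Multiset.toFinsupp mu.parts) g • pPart mu := by
  ext m
  by_cases hm : Finsupp.weight biWeight m = (n, 0)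
  · obtain ⟨lam, rfl⟩ := exists_partition hm
    rw [coeff_sum_smul_pPart]
  · rw [hg.coeff_eq_zero m hm, (isWeightedHomogeneous_sum_smul_pPart _).coeff_eq_zero m hm]

lemma isWeightedHomogeneous_hFn (n : ℕ) : IsWeightedHomogeneous biWeight (hFn n) (n, 0) :=
  isWeightedHomogeneous_sum_smul_pPart _

lemma isWeightedHomogeneous_schurList (l : List ℕ) :
    IsWeightedHomogeneous biWeight (schurList l) (l.sum, 0) := by
  rw [schurList, Matrix.det_apply]
  refine IsWeightedHomogeneous.sum _ _ _ fun σ _ => ?_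
  suffices h : IsWeightedHomogeneous biWeight
      (∏ i : Fin l.length, hInt ((l.get (σ i) : ℤ) - (σ i : ℕ) + (i : ℕ))) (l.sum, 0) by
    rw [Units.smul_def]
    exact (weightedHomogeneousSubmodule ℚ biWeight (l.sum, 0)).toAddSubgroup.zsmul_mem h _
  by_cases hpos : ∀ i : Fin l.length, 0 ≤ (l.get (σ i) : ℤ) - (σ i : ℕ) + (i : ℕ)
  · have hdeg : (∑ i : Fin l.length,
        ((((l.get (σ i) : ℤ) - (σ i : ℕ) + (i : ℕ)).toNat, 0) : ℕ × ℕ)) = (l.sum, 0) := by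
      ext
      · rw [Prod.fst_sum]
        zify
        rw [Finset.sum_congr rfl fun i _ => Int.toNat_of_nonneg (hpos i), Finset.sum_add_distrib,
          Finset.sum_sub_distrib, Equiv.sum_comp σ fun i => ((l.get i : ℕ) : ℤ),
          Equiv.sum_comp σ fun i : Fin l.length => ((i : ℕ) : ℤ), sub_add_cancel,
          ← Nat.cast_sum]
        simp [Fin.sum_univ_getElem]
      · simp [Prod.snd_sum]
    rw [← hdeg]
    refine IsWeightedHomogeneous.prod _ _ _ fun i _ => ?_
    rw [hInt, if_pos (hpos i)]
    exact isWeightedHomogeneous_hFn _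
  · push Not at hpos
    obtain ⟨i, hi⟩ := hpos
    rw [Finset.prod_eq_zero (Finset.mem_univ i) (by rw [hInt, if_neg hi.not_ge])]
    exact isWeightedHomogeneous_zero _ _ _

lemma coeff_sum_hFn {N : ℕ} {m : ℕ →₀ ℕ} (hm : (Finsupp.toMultiset m).sum ≤ N) :
    coeff m (∑ i ∈ Finset.range (N + 1), hFn i) = (zMon m)⁻¹ := by
  rw [← weight_biWeight_fst] at hm
  rw [coeff_sum, Finset.sum_eq_single (Finsupp.weight biWeight m).1]
  · by_cases h0 : m 0 = 0
    · obtain ⟨lam, h⟩ := exists_partition (n := (Finsupp.weight biWeight m).1) (m := m)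
        (Prod.ext rfl (by rw [weight_biWeight_snd, h0]))
      have := coeff_sum_smul_pPart (fun mu => (zed mu)⁻¹) lam
      rwa [zed_eq_zMon, h] at this
    · rw [(isWeightedHomogeneous_hFn _).coeff_eq_zero, zMon_eq_zero h0, inv_zero]
      intro h
      exact h0 (by rw [← weight_biWeight_snd, h])
  · intro i _ hne
    refine (isWeightedHomogeneous_hFn _).coeff_eq_zero m fun h => hne ?_
    rw [h]
  · intro h
    exact absurd (Finset.mem_range.mpr (Nat.lt_succ_of_le hm)) h

/-- `G` agrees with `exp (∑ a_K p_K / K)` up to degree `N`: its constant term is `1` and it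
satisfies the differential equations of that exponential. -/
def IsTruncExp (N : ℕ) (a : ℕ → ℚ) (G : SymFn) : Prop :=
  coeff 0 G = 1 ∧ ∀ (K : ℕ) (m : ℕ →₀ ℕ), (Finsupp.toMultiset m).sum + K ≤ N →
    coeff m (pderiv K G) = a K / K * coeff m G

lemma IsTruncExp.one (N : ℕ) : IsTruncExp N 0 1 := by
  constructor
  · simp
  · simp

lemma IsTruncExp.mul {N : ℕ} {a b : ℕ → ℚ} {F G : SymFn} (hF : IsTruncExp N a F)
    (hG : IsTruncExp N b G) : IsTruncExp N (a + b) (F * G) := by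
  refine ⟨?_, fun K m hm => ?_⟩
  · have h₁ := hF.1
    have h₂ := hG.1
    rw [← constantCoeff_eq] at *
    rw [map_mul, h₁, h₂, one_mul]
  · rw [pderiv_mul, coeff_add, coeff_mul, coeff_mul, coeff_mul, Finset.mul_sum,
      ← Finset.sum_add_distrib]
    refine Finset.sum_congr rfl fun x hx => ?_
    rw [Finset.HasAntidiagonal.mem_antidiagonal] at hx
    have hsum : (Finsupp.toMultiset x.1).sum + (Finsupp.toMultiset x.2).sum
        = (Finsupp.toMultiset m).sum := by rw [← hx, map_add, Multiset.sum_add]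
    rw [hF.2 K x.1 (by omega), hG.2 K x.2 (by omega), Pi.add_apply]
    ring

lemma IsTruncExp.coeff_mul_zMon {N : ℕ} {a : ℕ → ℚ} {G : SymFn} (hG : IsTruncExp N a G)
    (s : Multiset ℕ) (h0 : 0 ∉ s) (hs : s.sum ≤ N) :
    coeff (Multiset.toFinsupp s) G * zMon (Multiset.toFinsupp s) = (s.map a).prod := by
  induction s using Multiset.induction with
  | empty => simp [hG.1, zMon]
  | cons K s ih =>
    rw [Multiset.mem_cons, not_or] at h0
    rw [Multiset.sum_cons] at hs
    have hrec := hG.2 K (Multiset.toFinsupp s) (by simpa [add_comm] using hs)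
    rw [coeff_pderiv] at hrec
    have hK : (K : ℚ) ≠ 0 := Nat.cast_ne_zero.mpr (Ne.symm h0.1)
    rw [← Multiset.singleton_add, map_add, Multiset.toFinsupp_singleton, add_comm,
      zMon_add_single, Multiset.singleton_add, Multiset.map_cons,
      Multiset.prod_cons, ← ih h0.2 (by omega)]
    calc _ = coeff (Multiset.toFinsupp s + Finsupp.single K 1) G
            * ((Multiset.toFinsupp s K : ℚ) + 1) * (K * zMon (Multiset.toFinsupp s)) := by ring
      _ = _ := by
        rw [hrec]
        field_simp

lemma isTruncExp_sum_hFn (N : ℕ) : IsTruncExp N 1 (∑ i ∈ Finset.range (N + 1), hFn i) := by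
  refine ⟨?_, fun K m hm => ?_⟩
  · rw [coeff_sum_hFn (by simp)]
    simp [zMon]
  · rw [coeff_pderiv, coeff_sum_hFn (by simpa using hm), coeff_sum_hFn (by omega),
      zMon_add_single]
    have : (m K : ℚ) + 1 ≠ 0 := by positivity
    rw [mul_inv, mul_inv, mul_assoc, mul_assoc, inv_mul_cancel₀ this]
    simp [mul_comm]

lemma plethP_eq_rename (j : ℕ) (g : SymFn) : plethP j g = rename (· * j) g := by
  have h : aeval (fun i => X (i * j)) = rename (R := ℚ) (· * j) := algHom_ext fun i => by simp
  exact DFunLike.congr_fun h g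

lemma sum_toMultiset_mapDomain_mul (j : ℕ) (m : ℕ →₀ ℕ) :
    (Finsupp.toMultiset (m.mapDomain (· * j))).sum = (Finsupp.toMultiset m).sum * j := by
  rw [← Finsupp.toMultiset_map, Multiset.sum_map_mul_right, Multiset.map_id']

lemma IsTruncExp.plethP {N j : ℕ} (hj : 0 < j) {G : SymFn} (hG : IsTruncExp N 1 G) :
    IsTruncExp N (fun K => if j ∣ K then (j : ℚ) else 0) (plethP j G) := by
  have hinj : Function.Injective (· * j) := mul_left_injective₀ hj.ne'
  rw [plethP_eq_rename]
  refine ⟨?_, fun K m hm => ?_⟩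
  · rw [← hG.1, ← coeff_rename_mapDomain _ hinj G, Finsupp.mapDomain_zero]
  · beta_reduce
    by_cases hK : j ∣ K
    · obtain ⟨i, rfl⟩ := hK
      rw [if_pos (dvd_mul_right j i), mul_comm j i, pderiv_rename hinj]
      by_cases hm' : ∃ u : ℕ →₀ ℕ, u.mapDomain (· * j) = m
      · obtain ⟨u, rfl⟩ := hm'
        rw [sum_toMultiset_mapDomain_mul] at hm
        rw [coeff_rename_mapDomain _ hinj, coeff_rename_mapDomain _ hinj, hG.2 i u]
        · have : (j : ℚ) ≠ 0 := by positivity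
          push_cast
          rw [mul_comm (i : ℚ), ← div_div, div_self this, Pi.one_apply]
        · nlinarith
      · rw [coeff_rename_eq_zero _ _ _ fun u hu => absurd ⟨u, hu⟩ hm',
          coeff_rename_eq_zero _ _ _ fun u hu => absurd ⟨u, hu⟩ hm', mul_zero]
    · rw [if_neg hK, zero_div, zero_mul, pderiv_eq_zero_of_notMem_vars, coeff_zero]
      intro h
      obtain ⟨i, -, rfl⟩ := Finset.mem_image.mp (vars_rename _ _ h)
      exact hK (dvd_mul_left j i)

lemma isTruncExp_prod_plethP {N : ℕ} {G : SymFn} (hG : IsTruncExp N 1 G) (s : Multiset ℕ)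
    (h0 : ∀ j ∈ s, 0 < j) :
    IsTruncExp N (fun K => ((s.filter (fun j => j ∣ K)).sum : ℚ))
      (s.map fun j => plethP j G).prod := by
  induction s using Multiset.induction with
  | empty => simpa using! IsTruncExp.one N
  | cons j s ih =>
    rw [Multiset.map_cons, Multiset.prod_cons]
    convert (hG.plethP (h0 j (Multiset.mem_cons_self j s))).mul
      (ih fun i hi => h0 i (Multiset.mem_cons_of_mem hi)) using 1
    funext K
    by_cases h : j ∣ K <;> simp [h]

lemma hall_sum_smul {ι : Type*} (t : Finset ι) (f : SymFn) (c : ι → ℚ) (g : ι → SymFn) :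
    hall f (∑ i ∈ t, c i • g i) = ∑ i ∈ t, c i * hall f (g i) := by
  simp only [hall, coeff_sum, coeff_smul, smul_eq_mul, Finset.mul_sum, Finset.sum_mul]
  rw [Finset.sum_comm]
  exact Finset.sum_congr rfl fun i _ => Finset.sum_congr rfl fun m _ => by ring

lemma hall_pPart {n : ℕ} (f : SymFn) (mu : n.Partition) :
    hall f (pPart mu) = coeff (Multiset.toFinsupp mu.parts) f * zed mu := by
  rw [hall, zed_eq_zMon, Finset.sum_eq_single (Multiset.toFinsupp mu.parts)]
  · simp [pPart, pMul_eq_monomial]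
  · intro m _ hne
    simp [pPart, pMul_eq_monomial, coeff_monomial, hne.symm]
  · intro h
    simp [notMem_support_iff.mp h]

/-- Pairing with a truncated exponential is evaluation of the power sums. -/
lemma IsTruncExp.hall_eq_eval {N p : ℕ} (hN : p ≤ N) {a : ℕ → ℚ} {f G : SymFn}
    (hG : IsTruncExp N a G) (hf : IsWeightedHomogeneous biWeight f (p, 0)) :
    hall f G = eval a f := by
  rw [hall, eval_eq]
  refine Finset.sum_congr rfl fun m hm => ?_
  obtain ⟨lam, rfl⟩ := exists_partition (hf (mem_support_iff.mp hm))
  rw [mul_assoc, hG.coeff_mul_zMon lam.parts (fun h => (lam.parts_pos h).ne' rfl)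
    (lam.parts_sum.le.trans hN), Finset.prod_multiset_map_count]
  rfl

lemma pleth_sum_smul_pPart {n : ℕ} (c : n.Partition → ℚ) (H : SymFn) :
    pleth (∑ mu, c mu • pPart mu) H
      = ∑ mu, c mu • (mu.parts.map fun j => plethP j H).prod := by
  have h : ∀ f, pleth f H = aeval (fun k => plethP k H) f := fun f => rfl
  rw [h, map_sum]
  refine Finset.sum_congr rfl fun mu _ => ?_
  rw [map_smul, pPart, pMul, map_multiset_prod, Multiset.map_map]
  simp only [Function.comp_def, pGen, aeval_X]

/-- The Littlewood–Scharf–Thibon restriction formula, for homogeneous symmetric functions. -/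
theorem sum_xiEval_mul_hall {n N p : ℕ} (hN : p ≤ N) {f g : SymFn}
    (hf : IsWeightedHomogeneous biWeight f (p, 0)) (hg : IsWeightedHomogeneous biWeight g (n, 0)) :
    (∑ mu : Nat.Partition n, xiEval mu f * hall g (pMul mu.parts) / zed mu)
      = hall f (pleth g (∑ i ∈ Finset.range (N + 1), hFn i)) := by
  conv_rhs => rw [eq_sum_coeff_smul_pPart hg, pleth_sum_smul_pPart, hall_sum_smul]
  refine Finset.sum_congr rfl fun mu _ => ?_
  rw [(isTruncExp_prod_plethP (isTruncExp_sum_hFn N) mu.parts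
    fun _ hj => mu.parts_pos hj).hall_eq_eval hN hf, ← pPart, hall_pPart, ← mul_assoc,
    mul_div_cancel_right₀ _ (zed_ne_zero mu), mul_comm]
  simp only [xiEval, Nat.cast_multiset_sum]

lemma sum_partList {n : ℕ} (lam : n.Partition) : (partList lam).sum = n := by
  rw [partList, List.sum_reverse, ← Multiset.sum_coe, Multiset.sort_eq, lam.parts_sum]

/-- the multiplicity of the irreducible `S_n`-module indexed by
`(n−|λ|,λ)` in the restriction of the irreducible polynomial `GL_n`-module indexed
by `ν` — i.e. the character inner product
`∑_{μ ⊢ n} s_ν(Ξ_μ) χ^{(n−|λ|,λ)}(μ) / z_μ` — equals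
`⟨s_ν, s_{(n−|λ|,λ)}[1 + h_1 + h_2 + ⋯]⟩`, where the plethysm is truncated at any
degree `N ≥ |ν|` (higher terms do not pair with `s_ν`). -/
theorem restriction_multiplicity_plethysm (k n N p : ℕ) (lam : Nat.Partition k)
    (nuP : Nat.Partition p) (hn : k + (partList lam).getD 0 0 ≤ n) (hN : p ≤ N) :
    (∑ mu : Nat.Partition n,
        xiEval mu (schur nuP)
          * hall (schurList ((n - k) :: partList lam)) (pMul mu.parts) / zed mu)
      = hall (schur nuP)
          (pleth (schurList ((n - k) :: partList lam))
            (∑ i ∈ Finset.range (N + 1), hFn i)) := by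
  have hk : k ≤ n := le_trans (Nat.le_add_right _ _) hn
  refine sum_xiEval_mul_hall hN ?_ ?_
  · have h := isWeightedHomogeneous_schurList (partList nuP)
    rwa [sum_partList] at h
  · have h := isWeightedHomogeneous_schurList ((n - k) :: partList lam)
    rwa [List.sum_cons, sum_partList, Nat.sub_add_cancel hk] at h
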